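/- Suppose (P,Q,f,g,η) gives a Morita equivalence of triples between (A,B,ε) and (A',B',ε'), where in addition f : P⊗_{A'}Q → A and g : Q⊗_A P → A' satisfy q·f(p⊗q') = g(q⊗p)·q' and p·g(q⊗p') = f(p⊗q)·p' for all p,p' ∈ P and q,q' ∈ Q. Then there is a k-module isomorphism H₁((A,B,ε);M) ≅ H₁((A',B',ε');Q⊗_A M⊗_A P), where Q⊗_A M⊗_A P carries its natural A'-bimodule structure (which is B'-symmetric). -/

import Mathlib

/-!
STATEMENT 4: Suppose (P,Q,f,g,η) gives a Morita equivalence of triples between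
(A,B,ε) and (A',B',ε'), where in addition f : P⊗_{A'}Q → A and g : Q⊗_A P → A'
satisfy q·f(p⊗q') = g(q⊗p)·q' and p·g(q⊗p') = f(p⊗q)·p' for all p,p' ∈ P and
q,q' ∈ Q.  Then there is a k-module isomorphism
  H₁((A,B,ε);M) ≅ H₁((A',B',ε');Q⊗_A M⊗_A P),
where Q⊗_A M⊗_A P carries its natural A'-bimodule structure.

Balanced tensor products over the noncommutative rings A, A' are formalized as
quotients of tensor products over k by the span of the balancing relations.
H₁ = ker ∂₁ / im ∂₂ on each side; the differentials are quantified universally,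
characterized by their values on (the classes of) pure tensors, with the natural
A'-bimodule structure of Q⊗_A M⊗_A P (left action on the Q factor, right action on
the P factor) built into the characterization of ∂₁' and ∂₂'.
-/

open TensorProduct MulOpposite

set_option maxSynthPendingDepth 8

/-- The balancing relations defining `X ⊗[R] Y` inside `X ⊗[k] Y`, for a right
`R`-module `X` and a left `R`-module `Y`. -/
def moritaRel (k : Type*) [CommRing k] (R X Y : Type*) [Ring R]
    [AddCommGroup X] [AddCommGroup Y] [Module k X] [Module k Y]
    [Module Rᵐᵒᵖ X] [Module R Y] : Submodule k (X ⊗[k] Y) :=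
  Submodule.span k
    {z | ∃ (r : R) (x : X) (y : Y), z = (op r • x) ⊗ₜ[k] y - x ⊗ₜ[k] (r • y)}

/-- The balancing relations defining `X ⊗[R] M ⊗[R] Y` inside `X ⊗[k] M ⊗[k] Y`,
for a right `R`-module `X`, an `R`-bimodule `M` and a left `R`-module `Y`. -/
def tripleRel (k : Type*) [CommRing k] (R X M Y : Type*) [Ring R]
    [AddCommGroup X] [AddCommGroup M] [AddCommGroup Y]
    [Module k X] [Module k M] [Module k Y]
    [Module Rᵐᵒᵖ X] [Module R M] [Module Rᵐᵒᵖ M] [Module R Y] :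
    Submodule k (X ⊗[k] M ⊗[k] Y) :=
  Submodule.span k
    ({z | ∃ (r : R) (x : X) (m : M) (y : Y),
        z = (op r • x) ⊗ₜ[k] m ⊗ₜ[k] y - x ⊗ₜ[k] (r • m) ⊗ₜ[k] y} ∪
     {z | ∃ (r : R) (x : X) (m : M) (y : Y),
        z = x ⊗ₜ[k] (op r • m) ⊗ₜ[k] y - x ⊗ₜ[k] m ⊗ₜ[k] (r • y)})

namespace MoritaH1

set_option linter.unusedSectionVars false

/-- Abstract homotopy computation, for a set `T` with bimodule-like actions and a bracket `br`. -/
theorem abstract_homotopy {R T D : Type*} [Ring R] [AddCommGroup D]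
    (l r : R → T → T) (br : T → R → D)
    (l_mul : ∀ a b t, l (a * b) t = l a (l b t))
    (r_mul : ∀ a b t, r (a * b) t = r b (r a t))
    (lr : ∀ a b t, l a (r b t) = r b (l a t))
    (l_one : ∀ t, l 1 t = t) (r_one : ∀ t, r 1 t = t)
    (br_add : ∀ t a b, br t (a + b) = br t a + br t b)
    (l_add : ∀ t a b c, br (l (a + b) t) c = br (l a t) c + br (l b t) c)
    (r_add : ∀ t a b c, br (r (a + b) t) c = br (r a t) c + br (r b t) c)
    (rel : ∀ t a b, br t (a * b) = br (r a t) b + br (l b t) a)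
    {ι : Type*} (S : Finset ι) (x w : ι → R) (hS : ∑ c ∈ S, w c * x c = 1)
    (t : T) (a : R) :
    ∑ c ∈ S, ∑ d ∈ S, br (l (x c) (r (w d) t)) (x d * a * w c)
      = br t a + (∑ c ∈ S, br (l (x c) (r a t)) (w c)
          - ∑ c ∈ S, br (l (x c) (l a t)) (w c)) := by
  have br_sum : ∀ t (u : ι → R), br t (∑ c ∈ S, u c) = ∑ c ∈ S, br t (u c) := fun t u =>
    map_sum (AddMonoidHom.mk' (fun z => br t z) (br_add t)) u S
  have l_sum : ∀ t (u : ι → R) z, br (l (∑ c ∈ S, u c) t) z = ∑ c ∈ S, br (l (u c) t) z :=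
    fun t u z => map_sum (AddMonoidHom.mk' (fun y => br (l y t) z) (fun a b => l_add t a b z)) u S
  have r_sum : ∀ t (u : ι → R) z, br (r (∑ c ∈ S, u c) t) z = ∑ c ∈ S, br (r (u c) t) z :=
    fun t u z => map_sum (AddMonoidHom.mk' (fun y => br (r y t) z) (fun a b => r_add t a b z)) u S
  have br_one : ∀ t, br t 1 = 0 := by
    intro t
    have h := rel t 1 1
    rw [mul_one, l_one, r_one] at h
    simpa using h
  have key : ∀ c d, br (l (x c) (r (w d) t)) (x d * a * w c)
      = br (r (w d * x d * a) (l (x c) t)) (w c)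
        + (br (r (w d * x d) (l (w c * x c) t)) a
        + br (l (a * (w c * x c)) (r (w d) t)) (x d)) := by
    intro c d
    rw [rel, rel (l (w c) _)]
    simp only [l_mul, r_mul, lr]
  have h3 : ∀ s, ∑ d ∈ S, br (r (w d) s) (x d) = - ∑ d ∈ S, br (l (x d) s) (w d) := by
    intro s
    rw [eq_neg_iff_add_eq_zero, ← Finset.sum_add_distrib, ← br_one s, ← hS, br_sum]
    exact Finset.sum_congr rfl fun d _ => (rel _ _ _).symm
  simp only [key, Finset.sum_add_distrib]
  have e1 : ∑ c ∈ S, ∑ d ∈ S, br (r (w d * x d * a) (l (x c) t)) (w c)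
      = ∑ c ∈ S, br (l (x c) (r a t)) (w c) := by
    refine Finset.sum_congr rfl fun c _ => ?_
    rw [← r_sum, ← Finset.sum_mul, hS, one_mul, lr]
  have e2 : ∑ c ∈ S, ∑ d ∈ S, br (r (w d * x d) (l (w c * x c) t)) a = br t a := by
    simp only [← r_sum, hS, r_one, ← l_sum, l_one]
  have e3 : ∑ c ∈ S, ∑ d ∈ S, br (l (a * (w c * x c)) (r (w d) t)) (x d)
      = - ∑ c ∈ S, br (l (x c) (l a t)) (w c) := by
    rw [Finset.sum_comm]
    simp only [← l_sum, ← Finset.mul_sum, hS, mul_one]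
    simp only [lr, h3]
  rw [e1, e2, e3]
  abel

/-- Passing to subquotients. -/
theorem subquotient_equiv {k C0 C1 C2 D0 D1 D2 : Type*} [CommRing k]
    [AddCommGroup C0] [AddCommGroup C1] [AddCommGroup C2]
    [AddCommGroup D0] [AddCommGroup D1] [AddCommGroup D2]
    [Module k C0] [Module k C1] [Module k C2] [Module k D0] [Module k D1] [Module k D2]
    (p1 : C1 →ₗ[k] C0) (p2 : C2 →ₗ[k] C1) (q1 : D1 →ₗ[k] D0) (q2 : D2 →ₗ[k] D1)
    (φ : C1 →ₗ[k] D1) (ψ : D1 →ₗ[k] C1) (φ0 : C0 →ₗ[k] D0) (ψ0 : D0 →ₗ[k] C0)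
    (hφ1 : ∀ x, q1 (φ x) = φ0 (p1 x)) (hψ1 : ∀ x, p1 (ψ x) = ψ0 (q1 x))
    (hφ2 : ∀ x, φ (p2 x) ∈ LinearMap.range q2) (hψ2 : ∀ x, ψ (q2 x) ∈ LinearMap.range p2)
    (h : C0 →ₗ[k] C1) (h' : D0 →ₗ[k] D1)
    (hψφ : ∀ x, ψ (φ x) - (x + h (p1 x)) ∈ LinearMap.range p2)
    (hφψ : ∀ x, φ (ψ x) - (x + h' (q1 x)) ∈ LinearMap.range q2) :
    Nonempty
      ((↥(LinearMap.ker p1) ⧸ (LinearMap.range p2).comap (LinearMap.ker p1).subtype)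
        ≃ₗ[k]
       (↥(LinearMap.ker q1) ⧸ (LinearMap.range q2).comap (LinearMap.ker q1).subtype)) := by
  have a1 : ∀ x ∈ LinearMap.ker p1, φ x ∈ LinearMap.ker q1 := by
    intro x hx
    rw [LinearMap.mem_ker] at *
    rw [hφ1, hx, map_zero]
  have a2 : ∀ x ∈ LinearMap.ker q1, ψ x ∈ LinearMap.ker p1 := by
    intro x hx
    rw [LinearMap.mem_ker] at *
    rw [hψ1, hx, map_zero]
  refine ⟨LinearEquiv.ofLinearMap
    (Submodule.mapQ _ _ (φ.restrict a1) ?_) (Submodule.mapQ _ _ (ψ.restrict a2) ?_) ?_ ?_⟩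
  · rintro ⟨x, hx⟩ ⟨y, hy⟩
    have : φ x ∈ LinearMap.range q2 := by
      have := hφ2 y
      rwa [hy] at this
    exact this
  · rintro ⟨x, hx⟩ ⟨y, hy⟩
    have : ψ x ∈ LinearMap.range p2 := by
      have := hψ2 y
      rwa [hy] at this
    exact this
  · apply Submodule.linearMap_qext
    ext1 ⟨x, hx⟩
    refine (Submodule.Quotient.eq _).2 ?_
    have := hφψ x
    rw [LinearMap.mem_ker.1 hx, map_zero, add_zero] at this
    exact this
  · apply Submodule.linearMap_qext
    ext1 ⟨x, hx⟩
    refine (Submodule.Quotient.eq _).2 ?_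
    have := hψφ x
    rw [LinearMap.mem_ker.1 hx, map_zero, add_zero] at this
    exact this


section

variable (k : Type*) [CommRing k] (A : Type*) [Ring A] [Algebra k A]
    (A' : Type*) [Ring A'] [Algebra k A']
    (M : Type*) [AddCommGroup M] [Module k M]
    [Module A M] [Module Aᵐᵒᵖ M] [SMulCommClass A Aᵐᵒᵖ M]
    [IsScalarTower k A M] [IsScalarTower k Aᵐᵒᵖ M]
    (P : Type*) [AddCommGroup P] [Module k P]
    [Module A P] [Module A'ᵐᵒᵖ P] [SMulCommClass A A'ᵐᵒᵖ P]
    [IsScalarTower k A P] [IsScalarTower k A'ᵐᵒᵖ P]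
    (Q : Type*) [AddCommGroup Q] [Module k Q]
    [Module A' Q] [Module Aᵐᵒᵖ Q] [SMulCommClass A' Aᵐᵒᵖ Q]
    [IsScalarTower k A' Q] [IsScalarTower k Aᵐᵒᵖ Q]

/-- `Q ⊗[A] M ⊗[A] P` -/
abbrev NN := (Q ⊗[k] M ⊗[k] P) ⧸ tripleRel k A Q M P

variable {Q M P}

/-- class of a pure tensor -/
def cl (q : Q) (m : M) (p : P) : NN k A M P Q :=
  Submodule.Quotient.mk (q ⊗ₜ[k] m ⊗ₜ[k] p)

theorem cl_bal_left (a : A) (q : Q) (m : M) (p : P) :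
    cl k A (op a • q) m p = cl k A q (a • m) p :=
  (Submodule.Quotient.eq _).2 (Submodule.subset_span (Or.inl ⟨a, q, m, p, rfl⟩))

theorem cl_bal_right (a : A) (q : Q) (m : M) (p : P) :
    cl k A q (op a • m) p = cl k A q m (a • p) :=
  (Submodule.Quotient.eq _).2 (Submodule.subset_span (Or.inr ⟨a, q, m, p, rfl⟩))

/-- the class of a pure tensor as a trilinear map -/
def clL : Q →ₗ[k] M →ₗ[k] P →ₗ[k] NN k A M P Q :=
  TensorProduct.curry (TensorProduct.curry (tripleRel k A Q M P).mkQ)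

theorem clL_apply (q : Q) (m : M) (p : P) : clL k A q m p = cl k A q m p := rfl

theorem ind1 {X W : Type*} [AddCommGroup X] [Module k X] [AddCommGroup W] [Module k W]
    (S : Submodule k W) (T : NN k A M P Q ⊗[k] X →ₗ[k] W)
    (h : ∀ q m p x, T (cl k A q m p ⊗ₜ[k] x) ∈ S) (z : NN k A M P Q ⊗[k] X) : T z ∈ S := by
  induction z with
  | zero => simp
  | add a b ha hb => rw [map_add]; exact S.add_mem ha hb
  | tmul n x =>
    obtain ⟨n, rfl⟩ := Submodule.Quotient.mk_surjective _ n
    induction n with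
    | zero => simp
    | add a b ha hb =>
      rw [Submodule.Quotient.mk_add, TensorProduct.add_tmul, map_add]; exact S.add_mem ha hb
    | tmul y p =>
      induction y with
      | zero => simp
      | add a b ha hb =>
        rw [TensorProduct.add_tmul, Submodule.Quotient.mk_add, TensorProduct.add_tmul, map_add]
        exact S.add_mem ha hb
      | tmul q m => exact h q m p x

theorem ind3 {X Y Z W : Type*} [AddCommGroup X] [Module k X] [AddCommGroup Y] [Module k Y]
    [AddCommGroup Z] [Module k Z] [AddCommGroup W] [Module k W]
    (S : Submodule k W) (T : NN k A M P Q ⊗[k] X ⊗[k] Y ⊗[k] Z →ₗ[k] W)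
    (h : ∀ q m p x y z, T (cl k A q m p ⊗ₜ[k] x ⊗ₜ[k] y ⊗ₜ[k] z) ∈ S)
    (t : NN k A M P Q ⊗[k] X ⊗[k] Y ⊗[k] Z) : T t ∈ S := by
  induction t with
  | zero => simp
  | add a b ha hb => rw [map_add]; exact S.add_mem ha hb
  | tmul n z =>
    induction n with
    | zero => simp
    | add a b ha hb => rw [TensorProduct.add_tmul, map_add]; exact S.add_mem ha hb
    | tmul n y =>
      exact ind1 k A S (T ∘ₗ (TensorProduct.mk k _ _).flip z ∘ₗ (TensorProduct.mk k _ _).flip y)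
        (fun q m p x => h q m p x y z) n

theorem exists_lift {W : Type*} [AddCommGroup W] [Module k W]
    (T : Q →ₗ[k] M →ₗ[k] P →ₗ[k] W)
    (h1 : ∀ (a : A) q m p, T (op a • q) m p = T q (a • m) p)
    (h2 : ∀ (a : A) q m p, T q (op a • m) p = T q m (a • p)) :
    ∃ E : NN k A M P Q →ₗ[k] W, ∀ q m p, E (cl k A q m p) = T q m p := by
  refine ⟨Submodule.liftQ _ (TensorProduct.lift (TensorProduct.lift T)) ?_, fun q m p => ?_⟩
  · refine Submodule.span_le.2 ?_
    rintro z (⟨a, q, m, p, rfl⟩ | ⟨a, q, m, p, rfl⟩)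
    · simp [h1]
    · simp [h2]
  · simp [cl, Submodule.Quotient.mk]
    rfl

theorem exists_L (a' : A') :
    ∃ E : NN k A M P Q →ₗ[k] NN k A M P Q, ∀ q m p, E (cl k A q m p) = cl k A (a' • q) m p := by
  refine exists_lift k A ((clL k A) ∘ₗ (Algebra.lsmul k k Q a')) ?_ ?_
  · intro a q m p
    simp [clL_apply, ← cl_bal_left, smul_comm]
  · intro a q m p
    simp [clL_apply, cl_bal_right]

theorem exists_E (F : P →ₗ[k] Q →ₗ[k] A)
    (Fl : ∀ (a : A) p q, F (a • p) q = a * F p q)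
    (Fr : ∀ (a : A) p q, F p (op a • q) = F p q * a) (r : P) (s : Q) :
    ∃ E : NN k A M P Q →ₗ[k] M, ∀ q m p, E (cl k A q m p) = F r q • op (F p s) • m := by
  refine exists_lift k A
    ((LinearMap.mk₂ k (fun (q : Q) (m : M) =>
      ((Algebra.lsmul k k M (F r q)) ∘ₗ ((Algebra.lsmul k k M).toLinearMap.flip m) ∘ₗ
        (opLinearEquiv k).toLinearMap ∘ₗ (F.flip s) : P →ₗ[k] M)) ?_ ?_ ?_ ?_)) ?_ ?_
  · intro q q' m; ext p; simp
  · intro c q m; ext p; simp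
  · intro q m m'; ext p; simp
  · intro c q m; ext p; simp [smul_comm _ c]
  · intro a q m p
    simp [Fr, smul_comm]
  · intro a q m p
    simp [Fl]


theorem core
    (B : Type*) [CommRing B] [Algebra k B]
    (ε : B →ₐ[k] A) (hcen : ∀ (b : B) (a : A), ε b * a = a * ε b)
    (B' : Type*) [CommRing B'] [Algebra k B']
    (ε' : B' →ₐ[k] A') (hcen' : ∀ (b : B') (a : A'), ε' b * a = a * ε' b)
    (F : P →ₗ[k] Q →ₗ[k] A) (G : Q →ₗ[k] P →ₗ[k] A')
    (Fl : ∀ (a : A) p q, F (a • p) q = a * F p q)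
    (Fr : ∀ (a : A) p q, F p (op a • q) = F p q * a)
    (Fb : ∀ (a : A') p q, F (op a • p) q = F p (a • q))
    (Gl : ∀ (a : A') q p, G (a • q) p = a * G q p)
    (Gr : ∀ (a : A') q p, G q (op a • p) = G q p * a)
    (Gb : ∀ (a : A) q p, G (op a • q) p = G q (a • p))
    (c1 : ∀ p q q', op (F p q') • q = G q p • q')
    (c2 : ∀ p p' q, op (G q p') • p = F p q • p')
    (S : Finset (P × Q)) (hS : ∑ i ∈ S, F i.1 i.2 = 1)
    (T : Finset (Q × P)) (hT : ∑ i ∈ T, G i.1 i.2 = 1)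
    (η : B ≃ₐ[k] B')
    (hPsym : ∀ (α : B) (p : P), ε α • p = op (ε' (η α)) • p)
    (hQsym : ∀ (α : B) (q : Q), op (ε α) • q = ε' (η α) • q)
    (p1 : M ⊗[k] A →ₗ[k] M)
    (hp1 : ∀ (m : M) (a : A), p1 (m ⊗ₜ[k] a) = op a • m - a • m)
    (p2 : M ⊗[k] A ⊗[k] A ⊗[k] B →ₗ[k] M ⊗[k] A)
    (hp2 : ∀ (m : M) (a b : A) (α : B),
      p2 (m ⊗ₜ[k] a ⊗ₜ[k] b ⊗ₜ[k] α) =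
        (op (a * ε α) • m) ⊗ₜ[k] b - m ⊗ₜ[k] (a * ε α * b) + ((b * ε α) • m) ⊗ₜ[k] a)
    (q1 : NN k A M P Q ⊗[k] A' →ₗ[k] NN k A M P Q)
    (hq1 : ∀ (q : Q) (m : M) (p : P) (a' : A'),
      q1 (cl k A q m p ⊗ₜ[k] a') = cl k A q m (op a' • p) - cl k A (a' • q) m p)
    (q2 : NN k A M P Q ⊗[k] A' ⊗[k] A' ⊗[k] B' →ₗ[k] NN k A M P Q ⊗[k] A')
    (hq2 : ∀ (q : Q) (m : M) (p : P) (a b : A') (α' : B'),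
      q2 (cl k A q m p ⊗ₜ[k] a ⊗ₜ[k] b ⊗ₜ[k] α')
        = cl k A q m (op (a * ε' α') • p) ⊗ₜ[k] b
          - cl k A q m p ⊗ₜ[k] (a * ε' α' * b)
          + cl k A ((b * ε' α') • q) m p ⊗ₜ[k] a) :
    Nonempty
      ((↥(LinearMap.ker p1) ⧸ (LinearMap.range p2).comap (LinearMap.ker p1).subtype)
        ≃ₗ[k]
       (↥(LinearMap.ker q1) ⧸ (LinearMap.range q2).comap (LinearMap.ker q1).subtype)) := by
  -- basic sums
  have sumF : ∀ p q, ∑ t ∈ T, F p t.1 * F t.2 q = F p q := by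
    intro p q
    simp only [← Fr, c1]
    rw [← map_sum, ← Finset.sum_smul, hT, one_smul]
  have sumG : ∀ q p, ∑ i ∈ S, G q i.1 * G i.2 p = G q p := by
    intro q p
    simp only [← Gr, c2]
    rw [← map_sum, ← Finset.sum_smul, hS, one_smul]
  have Fε : ∀ α p q, F p q * ε α = F p (ε' (η α) • q) := by
    intro α p q
    rw [← hQsym, Fr]
  have Gε : ∀ α q p, G q p * ε' (η α) = G q (ε α • p) := by
    intro α p q
    rw [hPsym, Gr]
  have clr : ∀ (q : Q) (m : M) (u : P × Q → P),
      ∑ i ∈ S, cl k A q m (u i) = cl k A q m (∑ i ∈ S, u i) := by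
    intro q m u
    exact (map_sum (clL k A q m) u S).symm
  have cll : ∀ (u : P × Q → Q) (m : M) (p : P),
      ∑ i ∈ S, cl k A (u i) m p = cl k A (∑ i ∈ S, u i) m p := by
    intro u m p
    exact (map_sum (((clL k A).flip m).flip p) u S).symm
  have sw : ∀ (a b c : A) (m : M), op b • a • op c • m = a • op (c * b) • m := by
    intro a b c m
    rw [← smul_comm a (op b), smul_smul, ← op_mul]
  -- sums on P and Q
  have sP : ∀ p, ∑ j ∈ S, op (G j.2 p) • j.1 = p := by
    intro p
    simp only [c2]
    rw [← Finset.sum_smul, hS, one_smul]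
  have sQ : ∀ q (a : A), ∑ i ∈ S, G q (a • i.1) • i.2 = op a • q := by
    intro q a
    simp only [← c1, Fl]
    rw [← Finset.sum_smul, ← Finset.op_sum, ← Finset.mul_sum, hS, mul_one]
  -- the building blocks
  let I : Q → P → M →ₗ[k] NN k A M P Q := fun q p => ((clL k A) q).flip p
  have hI : ∀ q p m, I q p m = cl k A q m p := fun q p m => rfl
  let J : Q → P → A →ₗ[k] A' := fun q p => (G q) ∘ₗ (Algebra.lsmul k k P).toLinearMap.flip p
  have hJ : ∀ q p a, J q p a = G q (a • p) := fun q p a => rfl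
  choose E hE using exists_E (M := M) k A F Fl Fr
  let K : P → Q → A' →ₗ[k] A := fun r s =>
    (F.flip s) ∘ₗ ((Algebra.lsmul k k P).toLinearMap.flip r) ∘ₗ (opLinearEquiv k).toLinearMap
  have hK : ∀ r s a, K r s a = F (op a • r) s := fun r s a => rfl
  choose L hL using exists_L (M := M) (P := P) (Q := Q) k A A'
  let φ : M ⊗[k] A →ₗ[k] NN k A M P Q ⊗[k] A' :=
    ∑ i ∈ S, ∑ j ∈ S, TensorProduct.map (I i.2 j.1) (J j.2 i.1)
  have hφ : ∀ m a, φ (m ⊗ₜ[k] a) =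
      ∑ i ∈ S, ∑ j ∈ S, cl k A i.2 m j.1 ⊗ₜ[k] G j.2 (a • i.1) := by
    intro m a
    simp only [φ, LinearMap.sum_apply, TensorProduct.map_tmul, hI, hJ]
  let ψ : NN k A M P Q ⊗[k] A' →ₗ[k] M ⊗[k] A :=
    ∑ t ∈ T, ∑ u ∈ T, TensorProduct.map (E t.2 u.1) (K u.2 t.1)
  have hψ : ∀ q m p a, ψ (cl k A q m p ⊗ₜ[k] a) =
      ∑ t ∈ T, ∑ u ∈ T, (F t.2 q • op (F p u.1) • m) ⊗ₜ[k] F (op a • u.2) t.1 := by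
    intro q m p a
    simp only [ψ, LinearMap.sum_apply, TensorProduct.map_tmul, hE, hK]
  let φ0 : M →ₗ[k] NN k A M P Q := ∑ i ∈ S, I i.2 i.1
  have hφ0 : ∀ m, φ0 m = ∑ i ∈ S, cl k A i.2 m i.1 := by
    intro m
    simp only [φ0, LinearMap.sum_apply, hI]
  let ψ0 : NN k A M P Q →ₗ[k] M := ∑ t ∈ T, E t.2 t.1
  have hψ0 : ∀ q m p, ψ0 (cl k A q m p) = ∑ t ∈ T, F t.2 q • op (F p t.1) • m := by
    intro q m p
    simp only [ψ0, LinearMap.sum_apply, hE]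
  let x1 : (P × Q) × (Q × P) → A := fun c => F c.2.2 c.1.2
  let w1 : (P × Q) × (Q × P) → A := fun c => F c.1.1 c.2.1
  have hxw1 : ∑ c ∈ S ×ˢ T, w1 c * x1 c = 1 := by
    simp only [Finset.sum_product, w1, x1, sumF, hS]
  let x2 : (P × Q) × (Q × P) → A' := fun c => G c.1.2 c.2.2
  let w2 : (P × Q) × (Q × P) → A' := fun c => G c.2.1 c.1.1
  have hxw2 : ∑ c ∈ S ×ˢ T, w2 c * x2 c = 1 := by
    rw [Finset.sum_product, Finset.sum_comm]
    simp only [w2, x2, sumG, hT]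
  refine subquotient_equiv p1 p2 q1 q2 φ ψ φ0 ψ0 ?_ ?_ ?_ ?_
    (∑ c ∈ S ×ˢ T, (TensorProduct.mk k M A).flip (w1 c) ∘ₗ (Algebra.lsmul k k M (x1 c)))
    (∑ c ∈ S ×ˢ T, (TensorProduct.mk k _ A').flip (w2 c) ∘ₗ (L (x2 c))) ?_ ?_
  · -- φ commutes with the first differentials
    suffices h : q1 ∘ₗ φ = φ0 ∘ₗ p1 from fun x => LinearMap.congr_fun h x
    refine TensorProduct.ext' fun m a => ?_
    rw [LinearMap.comp_apply, LinearMap.comp_apply, hφ, hp1, map_sub, hφ0, hφ0]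
    simp only [map_sum, hq1, Finset.sum_sub_distrib]
    congr 1
    · simp only [clr, sP, cl_bal_right]
    · rw [Finset.sum_comm]
      simp only [cll, sQ, cl_bal_left]
  · -- ψ commutes with the first differentials
    intro x
    rw [← sub_eq_zero, ← Submodule.mem_bot k]
    refine ind1 k A ⊥ (p1 ∘ₗ ψ - ψ0 ∘ₗ q1) (fun q m p a => ?_) x
    rw [Submodule.mem_bot, LinearMap.sub_apply, sub_eq_zero,
      LinearMap.comp_apply, LinearMap.comp_apply, hψ, hq1, map_sub, hψ0, hψ0]
    simp only [map_sum, hp1, Finset.sum_sub_distrib]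
    congr 1
    · refine Finset.sum_congr rfl fun t _ => ?_
      simp only [sw, Fb]
      rw [← Finset.smul_sum, ← Finset.sum_smul, ← Finset.op_sum, sumF]
    · rw [Finset.sum_comm]
      refine Finset.sum_congr rfl fun t _ => ?_
      simp only [smul_smul (F _ _) (F _ _)]
      rw [← Finset.sum_smul, sumF, Fb]
  · -- φ on boundaries
    intro x
    induction x with
    | zero => simp
    | add a b ha hb => rw [map_add, map_add]; exact Submodule.add_mem _ ha hb
    | tmul x α =>
      induction x with
      | zero => simp
      | add a b ha hb =>
        rw [TensorProduct.add_tmul, map_add, map_add]; exact Submodule.add_mem _ ha hb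
      | tmul x b =>
        induction x with
        | zero => simp
        | add a b ha hb =>
          rw [TensorProduct.add_tmul, TensorProduct.add_tmul, map_add, map_add]
          exact Submodule.add_mem _ ha hb
        | tmul m a =>
          refine ⟨∑ i ∈ S, ∑ j ∈ S, ∑ l ∈ S, cl k A i.2 m j.1 ⊗ₜ[k] G j.2 (a • l.1)
            ⊗ₜ[k] G l.2 (b • i.1) ⊗ₜ[k] η α, ?_⟩
          rw [hp2, map_add, map_sub, hφ, hφ, hφ]
          simp only [map_sum, hq2, Finset.sum_add_distrib, Finset.sum_sub_distrib]
          congr 1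
          · congr 1
            · refine Finset.sum_congr rfl fun i _ => ?_
              rw [Finset.sum_comm]
              refine Finset.sum_congr rfl fun l _ => ?_
              simp only [Gε]
              rw [← TensorProduct.sum_tmul, clr, sP, cl_bal_right, ← hcen, mul_smul]
            · refine Finset.sum_congr rfl fun i _ => Finset.sum_congr rfl fun j _ => ?_
              rw [← TensorProduct.tmul_sum]
              congr 1
              simp only [← hcen', mul_assoc]
              rw [← Finset.mul_sum]
              have : ∀ l : P × Q, G j.2 (a • l.1) * G l.2 (b • i.1)
                = G (op a • j.2) l.1 * G l.2 (b • i.1) := fun l => by rw [Gb]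
              simp only [this]
              rw [sumG, hcen', Gε, Gb]
              simp only [mul_smul]
          · rw [Finset.sum_comm, Finset.sum_comm (s := S) (t := S) (f := fun i j =>
              cl k A i.2 ((b * ε α) • m) j.1 ⊗ₜ[k] G j.2 (a • i.1))]
            refine Finset.sum_congr rfl fun j _ => ?_
            rw [Finset.sum_comm]
            refine Finset.sum_congr rfl fun l _ => ?_
            rw [← TensorProduct.sum_tmul, cll, ← cl_bal_left]
            simp only [← hcen', mul_smul]
            rw [← Finset.smul_sum, sQ, op_mul, mul_smul, hQsym, smul_comm, ← hQsym]
  · -- ψ on boundaries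
    intro x
    refine ind3 k A (LinearMap.range p2) (ψ ∘ₗ q2) (fun q m p a b α' => ?_) x
    obtain ⟨α, rfl⟩ := η.surjective α'
    refine ⟨∑ t ∈ T, ∑ u ∈ T, ∑ v ∈ T, (F t.2 q • op (F p u.1) • m) ⊗ₜ[k]
      F (op a • u.2) v.1 ⊗ₜ[k] F (op b • v.2) t.1 ⊗ₜ[k] α, ?_⟩
    rw [LinearMap.comp_apply, hq2, map_add, map_sub, hψ, hψ, hψ]
    simp only [map_sum, hp2, Finset.sum_add_distrib, Finset.sum_sub_distrib]
    congr 1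
    · congr 1
      · refine Finset.sum_congr rfl fun t _ => ?_
        rw [Finset.sum_comm]
        refine Finset.sum_congr rfl fun v _ => ?_
        rw [← TensorProduct.sum_tmul]
        congr 1
        simp only [sw, Fε, Fb _ _ _]
        rw [← Finset.smul_sum, ← Finset.sum_smul, ← Finset.op_sum, sumF, ← hcen', mul_smul]
      · refine Finset.sum_congr rfl fun t _ => Finset.sum_congr rfl fun u _ => ?_
        rw [← TensorProduct.tmul_sum]
        congr 1
        simp only [← hcen, mul_assoc]
        rw [← Finset.mul_sum]
        simp only [Fb b]
        rw [sumF, hcen, Fε, Fb, Fb]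
        simp only [mul_smul]
    · refine Finset.sum_comm.trans (Eq.trans ?_ Finset.sum_comm)
      refine Finset.sum_congr rfl fun u _ => ?_
      rw [Finset.sum_comm]
      refine Finset.sum_congr rfl fun v _ => ?_
      rw [← TensorProduct.sum_tmul]
      congr 1
      simp only [← hcen, smul_smul (_ : A) (F _ _), mul_assoc]
      rw [← Finset.sum_smul, ← Finset.mul_sum, sumF, hcen, Fε, Fb, mul_smul]
  · -- first homotopy
    suffices h : (LinearMap.range p2).mkQ ∘ₗ (ψ ∘ₗ φ - (LinearMap.id +
        (∑ c ∈ S ×ˢ T, (TensorProduct.mk k M A).flip (w1 c) ∘ₗ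
          (Algebra.lsmul k k M (x1 c))) ∘ₗ p1)) = 0 from fun x =>
      (Submodule.Quotient.mk_eq_zero _).1 (LinearMap.congr_fun h x)
    refine TensorProduct.ext' fun m a => ?_
    have key := abstract_homotopy (R := A) (T := M) (fun a m => a • m) (fun a m => op a • m)
      (fun m a => (LinearMap.range p2).mkQ (m ⊗ₜ[k] a))
      (fun a b m => mul_smul _ _ _) (fun a b m => by simp only [op_mul, mul_smul])
      (fun a b m => smul_comm _ _ _) (fun m => one_smul _ _) (fun m => by simp)
      (fun m a b => by simp only [TensorProduct.tmul_add, map_add])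
      (fun m a b c => by simp only [add_smul, TensorProduct.add_tmul, map_add])
      (fun m a b c => by simp only [op_add, add_smul, TensorProduct.add_tmul, map_add])
      (fun m a b => by
        rw [← map_add, ← sub_eq_zero, ← map_sub]
        refine (Submodule.Quotient.mk_eq_zero _).2 ⟨-(m ⊗ₜ[k] a ⊗ₜ[k] b ⊗ₜ[k] 1), ?_⟩
        rw [map_neg, hp2, map_one, mul_one, mul_one]
        abel)
      (S ×ˢ T) x1 w1 hxw1 m a
    have e : (LinearMap.range p2).mkQ (ψ (φ (m ⊗ₜ[k] a))) =
        ∑ c ∈ S ×ˢ T, ∑ d ∈ S ×ˢ T, (LinearMap.range p2).mkQ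
          ((x1 c • op (w1 d) • m) ⊗ₜ[k] (x1 d * a * w1 c)) := by
      simp only [← map_sum]
      congr 1
      rw [hφ]
      simp only [map_sum, hψ, Finset.sum_product, x1, w1]
      refine Finset.sum_congr rfl fun i _ => ?_
      rw [Finset.sum_comm]
      refine Finset.sum_congr rfl fun t _ => Finset.sum_congr rfl fun j _ =>
        Finset.sum_congr rfl fun u _ => ?_
      rw [c2, Fl, Fl, mul_assoc]
    simp only [LinearMap.comp_apply, LinearMap.sub_apply, LinearMap.add_apply, map_sub, map_add, e]
    rw [key]
    simp only [LinearMap.id_apply, LinearMap.sum_apply, LinearMap.comp_apply, hp1, map_sub, map_sum,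
      LinearMap.flip_apply, TensorProduct.mk_apply, Algebra.lsmul_coe, LinearMap.zero_apply]
    abel
  · -- second homotopy
    intro z
    refine (Submodule.Quotient.mk_eq_zero _).1 ((Submodule.mem_bot k).1 (ind1 k A ⊥
      ((LinearMap.range q2).mkQ ∘ₗ (φ ∘ₗ ψ - (LinearMap.id +
        (∑ c ∈ S ×ˢ T, (TensorProduct.mk k _ A').flip (w2 c) ∘ₗ (L (x2 c))) ∘ₗ q1)))
      (fun q m p a => ?_) z))
    have cl_add_l : ∀ (q q' : Q) (m : M) (p : P), cl k A (q + q') m p = cl k A q m p + cl k A q' m p := by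
      intro q q' m p
      simp only [← clL_apply, map_add, LinearMap.add_apply]
    have cl_add_r : ∀ (q : Q) (m : M) (p p' : P), cl k A q m (p + p') = cl k A q m p + cl k A q m p' := by
      intro q q' m p
      simp only [← clL_apply, map_add]
    have key := abstract_homotopy (R := A') (T := Q × M × P)
      (fun a m => (a • m.1, m.2.1, m.2.2)) (fun a m => (m.1, m.2.1, op a • m.2.2))
      (fun m a => (LinearMap.range q2).mkQ (cl k A m.1 m.2.1 m.2.2 ⊗ₜ[k] a))
      (fun a b m => by simp only [mul_smul]) (fun a b m => by simp only [op_mul, mul_smul])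
      (fun a b m => rfl) (fun m => by simp only [one_smul]) (fun m => by simp)
      (fun m a b => by simp only [TensorProduct.tmul_add, map_add])
      (fun m a b c => by simp only [add_smul, cl_add_l, TensorProduct.add_tmul, map_add])
      (fun m a b c => by simp only [op_add, add_smul, cl_add_r, TensorProduct.add_tmul, map_add])
      (fun m a b => by
        rw [← map_add, ← sub_eq_zero, ← map_sub]
        refine (Submodule.Quotient.mk_eq_zero _).2
          ⟨-(cl k A m.1 m.2.1 m.2.2 ⊗ₜ[k] a ⊗ₜ[k] b ⊗ₜ[k] 1), ?_⟩
        rw [map_neg, hq2, map_one, mul_one, mul_one]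
        abel)
      (S ×ˢ T) x2 w2 hxw2 (q, m, p) a
    have e : (LinearMap.range q2).mkQ (φ (ψ (cl k A q m p ⊗ₜ[k] a))) =
        ∑ c ∈ S ×ˢ T, ∑ d ∈ S ×ˢ T, (LinearMap.range q2).mkQ
          (cl k A (x2 c • q) m (op (w2 d) • p) ⊗ₜ[k] (x2 d * a * w2 c)) := by
      simp only [← map_sum]
      congr 1
      rw [hψ]
      simp only [map_sum, hφ, Finset.sum_product_right, x2, w2]
      refine Finset.sum_congr rfl fun t _ => ?_
      rw [Finset.sum_comm]
      refine Finset.sum_congr rfl fun i _ => Finset.sum_congr rfl fun u _ =>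
        Finset.sum_congr rfl fun j _ => ?_
      rw [← cl_bal_left, c1, cl_bal_right, ← c2 p j.1 u.1, ← c2 _ i.1 t.1, Gr, Gr]
    simp only [LinearMap.comp_apply, LinearMap.sub_apply, LinearMap.add_apply, map_sub, map_add, e]
    rw [key]
    simp only [LinearMap.id_apply, LinearMap.sum_apply, LinearMap.comp_apply, hq1, map_sub, map_sum,
      LinearMap.flip_apply, TensorProduct.mk_apply, hL, Submodule.mem_bot]
    abel

end

end MoritaH1

theorem secondaryHochschild_H1_moritaInvariant
    (k : Type*) [CommRing k]
    -- the triple (A,B,ε)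
    (A : Type*) [Ring A] [Algebra k A]
    (B : Type*) [CommRing B] [Algebra k B]
    (ε : B →ₐ[k] A) (hcen : ∀ (b : B) (a : A), ε b * a = a * ε b)
    -- the triple (A',B',ε')
    (A' : Type*) [Ring A'] [Algebra k A']
    (B' : Type*) [CommRing B'] [Algebra k B']
    (ε' : B' →ₐ[k] A') (hcen' : ∀ (b : B') (a : A'), ε' b * a = a * ε' b)
    -- M is an A-bimodule, k acting centrally, which is B-symmetric
    (M : Type*) [AddCommGroup M] [Module k M]
    [Module A M] [Module Aᵐᵒᵖ M] [SMulCommClass A Aᵐᵒᵖ M]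
    [IsScalarTower k A M] [IsScalarTower k Aᵐᵒᵖ M]
    (hsymm : ∀ (b : B) (m : M), ε b • m = op (ε b) • m)
    -- P is an (A,A')-bimodule, k acting centrally
    (P : Type*) [AddCommGroup P] [Module k P]
    [Module A P] [Module A'ᵐᵒᵖ P] [SMulCommClass A A'ᵐᵒᵖ P]
    [IsScalarTower k A P] [IsScalarTower k A'ᵐᵒᵖ P]
    -- Q is an (A',A)-bimodule, k acting centrally
    (Q : Type*) [AddCommGroup Q] [Module k Q]
    [Module A' Q] [Module Aᵐᵒᵖ Q] [SMulCommClass A' Aᵐᵒᵖ Q]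
    [IsScalarTower k A' Q] [IsScalarTower k Aᵐᵒᵖ Q]
    -- f : P ⊗[A'] Q ≅ A, an isomorphism of A-bimodules
    (f : ((P ⊗[k] Q) ⧸ moritaRel k A' P Q) ≃ₗ[k] A)
    (hfl : ∀ (a : A) (p : P) (q : Q),
      f (Submodule.Quotient.mk ((a • p) ⊗ₜ[k] q))
        = a * f (Submodule.Quotient.mk (p ⊗ₜ[k] q)))
    (hfr : ∀ (p : P) (q : Q) (a : A),
      f (Submodule.Quotient.mk (p ⊗ₜ[k] (op a • q)))
        = f (Submodule.Quotient.mk (p ⊗ₜ[k] q)) * a)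
    -- g : Q ⊗[A] P ≅ A', an isomorphism of A'-bimodules
    (g : ((Q ⊗[k] P) ⧸ moritaRel k A Q P) ≃ₗ[k] A')
    (hgl : ∀ (a' : A') (q : Q) (p : P),
      g (Submodule.Quotient.mk ((a' • q) ⊗ₜ[k] p))
        = a' * g (Submodule.Quotient.mk (q ⊗ₜ[k] p)))
    (hgr : ∀ (q : Q) (p : P) (a' : A'),
      g (Submodule.Quotient.mk (q ⊗ₜ[k] (op a' • p)))
        = g (Submodule.Quotient.mk (q ⊗ₜ[k] p)) * a')
    -- compatibility: q·f(p⊗q') = g(q⊗p)·q' and p·g(q⊗p') = f(p⊗q)·p'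
    (hcompat₁ : ∀ (p : P) (q q' : Q),
      op (f (Submodule.Quotient.mk (p ⊗ₜ[k] q'))) • q
        = g (Submodule.Quotient.mk (q ⊗ₜ[k] p)) • q')
    (hcompat₂ : ∀ (p p' : P) (q : Q),
      op (g (Submodule.Quotient.mk (q ⊗ₜ[k] p'))) • p
        = f (Submodule.Quotient.mk (p ⊗ₜ[k] q)) • p')
    -- η : B ≅ B' as k-algebras
    (η : B ≃ₐ[k] B')
    -- P and Q are symmetric with respect to B and B' under η
    (hPsym : ∀ (α : B) (p : P), ε α • p = op (ε' (η α)) • p)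
    (hQsym : ∀ (α : B) (q : Q), op (ε α) • q = ε' (η α) • q)
    -- the secondary Hochschild differentials ∂₁, ∂₂ of (A,B,ε) with coefficients in M
    (p1 : M ⊗[k] A →ₗ[k] M)
    (hp1 : ∀ (m : M) (a : A), p1 (m ⊗ₜ[k] a) = op a • m - a • m)
    (p2 : M ⊗[k] A ⊗[k] A ⊗[k] B →ₗ[k] M ⊗[k] A)
    (hp2 : ∀ (m : M) (a b : A) (α : B),
      p2 (m ⊗ₜ[k] a ⊗ₜ[k] b ⊗ₜ[k] α) =
        (op (a * ε α) • m) ⊗ₜ[k] b - m ⊗ₜ[k] (a * ε α * b) + ((b * ε α) • m) ⊗ₜ[k] a)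
    -- the secondary Hochschild differentials ∂₁', ∂₂' of (A',B',ε') with
    -- coefficients in N = Q ⊗[A] M ⊗[A] P
    (q1 : ((Q ⊗[k] M ⊗[k] P) ⧸ tripleRel k A Q M P) ⊗[k] A'
        →ₗ[k] ((Q ⊗[k] M ⊗[k] P) ⧸ tripleRel k A Q M P))
    (hq1 : ∀ (q : Q) (m : M) (p : P) (a' : A'),
      q1 ((Submodule.Quotient.mk (q ⊗ₜ[k] m ⊗ₜ[k] p)
            : (Q ⊗[k] M ⊗[k] P) ⧸ tripleRel k A Q M P) ⊗ₜ[k] a')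
        = Submodule.Quotient.mk (q ⊗ₜ[k] m ⊗ₜ[k] (op a' • p))
          - Submodule.Quotient.mk ((a' • q) ⊗ₜ[k] m ⊗ₜ[k] p))
    (q2 : ((Q ⊗[k] M ⊗[k] P) ⧸ tripleRel k A Q M P) ⊗[k] A' ⊗[k] A' ⊗[k] B'
        →ₗ[k] ((Q ⊗[k] M ⊗[k] P) ⧸ tripleRel k A Q M P) ⊗[k] A')
    (hq2 : ∀ (q : Q) (m : M) (p : P) (a b : A') (α' : B'),
      q2 ((Submodule.Quotient.mk (q ⊗ₜ[k] m ⊗ₜ[k] p)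
            : (Q ⊗[k] M ⊗[k] P) ⧸ tripleRel k A Q M P) ⊗ₜ[k] a ⊗ₜ[k] b ⊗ₜ[k] α')
        = (Submodule.Quotient.mk (q ⊗ₜ[k] m ⊗ₜ[k] (op (a * ε' α') • p))
            : (Q ⊗[k] M ⊗[k] P) ⧸ tripleRel k A Q M P) ⊗ₜ[k] b
          - (Submodule.Quotient.mk (q ⊗ₜ[k] m ⊗ₜ[k] p)
            : (Q ⊗[k] M ⊗[k] P) ⧸ tripleRel k A Q M P) ⊗ₜ[k] (a * ε' α' * b)
          + (Submodule.Quotient.mk (((b * ε' α') • q) ⊗ₜ[k] m ⊗ₜ[k] p)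
            : (Q ⊗[k] M ⊗[k] P) ⧸ tripleRel k A Q M P) ⊗ₜ[k] a) :
    -- H₁((A,B,ε);M) ≅ H₁((A',B',ε');Q⊗_A M⊗_A P) as k-modules
    Nonempty
      ((↥(LinearMap.ker p1) ⧸ (LinearMap.range p2).comap (LinearMap.ker p1).subtype)
        ≃ₗ[k]
       (↥(LinearMap.ker q1) ⧸ (LinearMap.range q2).comap (LinearMap.ker q1).subtype)) := by
  
  obtain ⟨z, hz⟩ := f.surjective 1
  obtain ⟨z, rfl⟩ := Submodule.Quotient.mk_surjective _ z
  obtain ⟨S, rfl⟩ := TensorProduct.exists_finset z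
  obtain ⟨y, hy⟩ := g.surjective 1
  obtain ⟨y, rfl⟩ := Submodule.Quotient.mk_surjective _ y
  obtain ⟨T, rfl⟩ := TensorProduct.exists_finset y
  refine MoritaH1.core k A A' B ε hcen B' ε' hcen'
    (TensorProduct.curry (f.toLinearMap ∘ₗ (moritaRel k A' P Q).mkQ))
    (TensorProduct.curry (g.toLinearMap ∘ₗ (moritaRel k A Q P).mkQ))
    hfl (fun a p q => hfr p q a) ?_ hgl (fun a q p => hgr q p a) ?_
    hcompat₁ hcompat₂ S ?_ T ?_ η hPsym hQsym p1 hp1 p2 hp2 q1 hq1 q2 hq2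
  · intro a p q
    exact congrArg f ((Submodule.Quotient.eq _).2 (Submodule.subset_span ⟨a, p, q, rfl⟩))
  · intro a q p
    exact congrArg g ((Submodule.Quotient.eq _).2 (Submodule.subset_span ⟨a, q, p, rfl⟩))
  · rw [← hz]
    exact (map_sum (f.toLinearMap ∘ₗ (moritaRel k A' P Q).mkQ) _ S).symm
  · rw [← hy]
    exact (map_sum (g.toLinearMap ∘ₗ (moritaRel k A Q P).mkQ) _ T).symm
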